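/- Let k, c, d be natural numbers and let χ₁, …, χ_d be nonzero elements of ℤ^k. In the polynomial ring R = ℂ[y₁,…,y_c, x₁,…,x_d, z₁,…,z_d], assign each variable y_j the weight 0 ∈ ℤ^k, each x_i the weight χ_i, and each z_i the weight −χ_i, and define the weight of a monomial to be the sum, with multiplicity, of the weights of its variables. Let A ⊆ R be the ℂ-subalgebra spanned by all monomials of weight 0. Then the Krull dimension of A equals c + d if and only if χ₁, …, χ_d are linearly independent over ℚ (as elements of ℚ^k). -/

import Mathlib

open MvPolynomial

noncomputable section

/-- The variables of the polynomial ring `R = ℂ[y₁,…,y_c, x₁,…,x_d, z₁,…,z_d]`: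
`Sum.inl j` is `y_j`, `Sum.inr (Sum.inl i)` is `x_i`, `Sum.inr (Sum.inr i)` is `z_i`. -/
abbrev SymVar (c d : ℕ) : Type := Fin c ⊕ (Fin d ⊕ Fin d)

/-- The `ℤ^k`-weight of each variable: `y_j` has weight `0`, `x_i` has weight `χ i`,
`z_i` has weight `-χ i`. -/
def varWeight (k c d : ℕ) (χ : Fin d → Fin k → ℤ) : SymVar c d → Fin k → ℤ :=
  Sum.elim (fun _ => 0) (Sum.elim (fun i => χ i) (fun i => -χ i))

/-- The weight of a monomial with exponent vector `e`: the sum, with multiplicity, of the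
weights of its variables. -/
def monWeight (k c d : ℕ) (χ : Fin d → Fin k → ℤ) (e : SymVar c d →₀ ℕ) : Fin k → ℤ :=
  e.sum fun v n => n • varWeight k c d χ v

/-!
The products `xᵢzᵢ` and the variables `yⱼ` are `c + d` algebraically independent invariants. If the
`χᵢ` are linearly independent, the exponents of `xᵢ` and `zᵢ` in an invariant monomial agree, so
these elements generate `A`, which is then a polynomial ring in `c + d` variables.

A nontrivial relation `∑ gᵢ χᵢ = 0` yields one more invariant, `∏ xᵢ^(gᵢ⁺) zᵢ^(gᵢ⁻)`. It involves no
`yⱼ` and, for each `i`, at most one of `xᵢ` and `zᵢ`. So in the list of `c + d + 1` monomials that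
begins with it, each monomial involves a variable absent from the earlier ones. Killing these new
variables successively, last ones first, gives a strict chain of `c + d + 2` primes of `A`.
-/

section CoordinatePrime

variable {R σ α : Type*} [CommRing R] [IsDomain R] (A : Subalgebra R (MvPolynomial σ R))

/-- The prime ideal of `A` attached to the coordinate subspace with coordinates `S`: it consists of
the polynomials that become zero when the variables outside `S` are set to zero. -/
def coordinatePrime (S : Set σ) : PrimeSpectrum A :=
  ⟨RingHom.ker ((killCompl (Subtype.val_injective (p := (· ∈ S)))).comp A.val),
    RingHom.ker_isPrime _⟩

variable {A}

lemma mem_coordinatePrime_iff {S : Set σ} {p : A} :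
    p ∈ (coordinatePrime A S).asIdeal ↔
      ∀ e ∈ (p : MvPolynomial σ R).support, ¬ (e.support : Set σ) ⊆ S := by
  change killCompl _ (p : MvPolynomial σ R) = 0 ↔ _
  simp only [MvPolynomial.ext_iff, coeff_killCompl, coeff_zero, mem_support_iff]
  constructor
  · intro hp e he hS
    rw [← e.mapDomain_comapDomain _ (Subtype.val_injective (p := (· ∈ S)))
      (Subtype.range_val.symm ▸ hS)] at he
    exact he (hp _)
  · intro hp e
    by_contra he
    classical
    refine hp _ he fun v hv => ?_
    obtain ⟨u, -, rfl⟩ := Finset.mem_image.mp (Finsupp.mapDomain_support hv)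
    exact u.2

lemma coordinatePrime_lt_coordinatePrime {S T : Set σ} (hST : S ⊆ T) {e : σ →₀ ℕ}
    (heA : monomial e 1 ∈ A) (heT : (e.support : Set σ) ⊆ T) (heS : ¬ (e.support : Set σ) ⊆ S) :
    coordinatePrime A T < coordinatePrime A S := by
  refine lt_of_le_not_ge (fun p hp => ?_) fun hle => ?_
  · rw [mem_coordinatePrime_iff] at hp ⊢
    exact fun m hm hmS => hp m hm (hmS.trans hST)
  · have hmem : (⟨monomial e 1, heA⟩ : A) ∈ (coordinatePrime A S).asIdeal :=
      mem_coordinatePrime_iff.mpr fun m hm => by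
        rwa [Finset.mem_singleton.mp (support_monomial_subset hm)]
    exact mem_coordinatePrime_iff.mp (hle hmem) e (by classical simp [coeff_monomial]) heT

lemma card_le_ringKrullDim_of_exists_private_variable [Fintype α] (e : α → σ →₀ ℕ)
    (heA : ∀ a, monomial (e a) 1 ∈ A)
    (hprivate : ∀ s : Finset α, s.Nonempty →
      ∃ a ∈ s, ∃ v ∈ (e a).support, ∀ b ∈ s, v ∈ (e b).support → b = a) :
    (Fintype.card α : WithBot ℕ∞) ≤ ringKrullDim A := by
  classical
  let vars (s : Finset α) : Set σ := ⋃ a ∈ s, (e a).support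
  have card_le_coheight (s : Finset α) :
      (s.card : ℕ∞) ≤ Order.coheight (coordinatePrime A (vars s)) := by
    induction s using Finset.strongInduction with
    | H s ih =>
      rcases s.eq_empty_or_nonempty with rfl | hs
      · simp
      obtain ⟨a, ha, v, hv, hva⟩ := hprivate s hs
      have hlt : coordinatePrime A (vars s) < coordinatePrime A (vars (s.erase a)) := by
        refine coordinatePrime_lt_coordinatePrime
          (Set.biUnion_subset_biUnion_left (Finset.erase_subset a s)) (heA a)
          (Set.subset_biUnion_of_mem (u := fun b => ((e b).support : Set σ)) ha) fun hsub => ?_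
        obtain ⟨b, hb, hvb⟩ := Set.mem_iUnion₂.mp (hsub hv)
        exact Finset.ne_of_mem_erase hb (hva b (Finset.mem_of_mem_erase hb) hvb)
      calc (s.card : ℕ∞) = (s.erase a).card + 1 := mod_cast (Finset.card_erase_add_one ha).symm
        _ ≤ Order.coheight (coordinatePrime A (vars (s.erase a))) + 1 := by
          gcongr; exact ih _ (Finset.erase_ssubset ha)
        _ ≤ Order.coheight (coordinatePrime A (vars s)) := Order.coheight_add_one_le hlt
  calc (Fintype.card α : WithBot ℕ∞)
      ≤ Order.coheight (coordinatePrime A (vars Finset.univ)) :=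
        WithBot.coe_le_coe.mpr (card_le_coheight Finset.univ)
    _ ≤ ringKrullDim A := Order.coheight_le_krullDim _

end CoordinatePrime

lemma monomial_mem_adjoin_of_mem_closure {R σ : Type*} [CommSemiring R] {S : Set (σ →₀ ℕ)}
    {e : σ →₀ ℕ} (he : e ∈ AddSubmonoid.closure S) :
    monomial e (1 : R) ∈ Algebra.adjoin R ((fun m => monomial m (1 : R)) '' S) := by
  induction he using AddSubmonoid.closure_induction with
  | mem m hm => exact Algebra.subset_adjoin ⟨m, hm, rfl⟩
  | zero => exact one_mem _
  | add m n _ _ hm hn => simpa only [monomial_mul, one_mul] using mul_mem hm hn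

lemma ringKrullDim_adjoin_range_of_algebraicIndependent {K B τ : Type*} [Field K] [CommRing B]
    [Algebra K B] [Fintype τ] {f : τ → B} (hf : AlgebraicIndependent K f) :
    ringKrullDim (Algebra.adjoin K (Set.range f)) = Fintype.card τ := by
  rw [← ringKrullDim_eq_of_ringEquiv hf.aevalEquiv.toRingEquiv,
    MvPolynomial.ringKrullDim_of_isNoetherianRing, ringKrullDim_eq_zero_of_field, zero_add,
    Nat.card_eq_fintype_card]

section WeightZero

variable (R : Type*) {σ M : Type*} [CommSemiring R] [AddCommMonoid M]

/-- The subalgebra generated by the monomials of weight zero, where the variable `v` has weight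
`w v`. -/
def weightZeroSubalgebra (w : σ → M) : Subalgebra R (MvPolynomial σ R) :=
  Algebra.adjoin R {p | ∃ e : σ →₀ ℕ, p = monomial e 1 ∧ Finsupp.weight w e = 0}

variable {R}

lemma monomial_mem_weightZeroSubalgebra {w : σ → M} {e : σ →₀ ℕ} (he : Finsupp.weight w e = 0) :
    monomial e 1 ∈ weightZeroSubalgebra R w :=
  Algebra.subset_adjoin ⟨e, rfl, he⟩

end WeightZero

section SymmetricWeight

variable {κ ι M : Type*} [AddCommGroup M]

/-- The weights of a symmetric torus action, on the variables `y` (indexed by `κ`), `x` and `z`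
(both indexed by `ι`), with an arbitrary abelian group in place of the character lattice. -/
def symmetricWeight (χ : ι → M) : κ ⊕ (ι ⊕ ι) → M :=
  Sum.elim (fun _ => 0) (Sum.elim χ (-χ))

/-- The exponent vectors of the invariants `yⱼ` and `xᵢ zᵢ`, which every symmetric action has. -/
def basicExponent : κ ⊕ ι → κ ⊕ (ι ⊕ ι) →₀ ℕ :=
  Sum.elim (fun j => .single (.inl j) 1)
    (fun i => .single (.inr (.inl i)) 1 + .single (.inr (.inr i)) 1)

lemma weight_basicExponent (χ : ι → M) (t : κ ⊕ ι) :
    Finsupp.weight (symmetricWeight χ) (basicExponent t) = 0 := by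
  rcases t with j | i <;> simp [basicExponent, symmetricWeight, Finsupp.weight_single]

lemma algebraicIndependent_monomial_basicExponent (R : Type*) [CommRing R] :
    AlgebraicIndependent R fun t : κ ⊕ ι => monomial (basicExponent t) (1 : R) := by
  let setZOne : MvPolynomial (κ ⊕ (ι ⊕ ι)) R →ₐ[R] MvPolynomial (κ ⊕ ι) R :=
    aeval (Sum.elim (fun j => X (.inl j)) (Sum.elim (fun i => X (.inr i)) (fun _ => 1)))
  have setZOne_basic : (setZOne ∘ fun t => monomial (basicExponent t) 1) = X := by
    ext1 t
    rcases t with j | i <;> simp [setZOne, basicExponent, monomial_add_single, bind₁_monomial]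
  exact .of_comp setZOne (setZOne_basic ▸ algebraicIndependent_X _ _)

section Finite

variable [Finite κ]

lemma weight_symmetricWeight [Fintype ι] (χ : ι → M) (e : κ ⊕ (ι ⊕ ι) →₀ ℕ) :
    Finsupp.weight (symmetricWeight χ) e =
      ∑ i, ((e (.inr (.inl i)) : ℤ) - e (.inr (.inr i))) • χ i := by
  cases nonempty_fintype κ
  simp [Finsupp.weight_eq_sum, symmetricWeight, sub_smul, ← sub_eq_add_neg]

lemma mem_closure_range_basicExponent [Finite ι] {e : κ ⊕ (ι ⊕ ι) →₀ ℕ}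
    (he : ∀ i, e (.inr (.inl i)) = e (.inr (.inr i))) :
    e ∈ AddSubmonoid.closure (Set.range basicExponent) := by
  cases nonempty_fintype κ
  cases nonempty_fintype ι
  have e_eq_sum : e = ∑ j, e (.inl j) • basicExponent (.inl j) +
      ∑ i, e (.inr (.inl i)) • basicExponent (.inr i) := by
    classical
    ext v
    rcases v with j | i | i <;> simp [basicExponent, Finsupp.single_apply, he]
  rw [e_eq_sum]
  have basic_mem (t : κ ⊕ ι) : basicExponent t ∈ AddSubmonoid.closure (Set.range basicExponent) :=
    AddSubmonoid.subset_closure ⟨t, rfl⟩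
  exact add_mem (sum_mem fun j _ => nsmul_mem (basic_mem (.inl j)) _)
    (sum_mem fun i _ => nsmul_mem (basic_mem (.inr i)) _)

lemma weightZeroSubalgebra_eq_adjoin_of_linearIndependent [Finite ι] (R : Type*)
    [CommSemiring R] {χ : ι → M} (hχ : LinearIndependent ℤ χ) :
    weightZeroSubalgebra R (symmetricWeight (κ := κ) χ) =
      Algebra.adjoin R (Set.range fun t => monomial (basicExponent t) 1) := by
  cases nonempty_fintype ι
  refine le_antisymm (Algebra.adjoin_le ?_) (Algebra.adjoin_le ?_)
  · rintro _ ⟨e, rfl, he⟩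
    rw [weight_symmetricWeight] at he
    have exponents_eq (i : ι) : e (.inr (.inl i)) = e (.inr (.inr i)) := by
      have := Fintype.linearIndependent_iff.mp hχ _ he i
      omega
    rw [Set.range_comp' (fun m => monomial m 1) basicExponent]
    exact monomial_mem_adjoin_of_mem_closure (mem_closure_range_basicExponent exponents_eq)
  · rintro _ ⟨t, rfl⟩
    exact monomial_mem_weightZeroSubalgebra (weight_basicExponent χ t)

/-- The exponent vector of the monomial `∏ xᵢ^(gᵢ⁺) zᵢ^(gᵢ⁻)`, where `gᵢ⁺` and `gᵢ⁻` are the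
positive and negative parts of `gᵢ`. It is invariant when `∑ gᵢ χᵢ = 0`. -/
def relationExponent [Finite ι] (g : ι → ℤ) : κ ⊕ (ι ⊕ ι) →₀ ℕ :=
  Finsupp.equivFunOnFinite.symm
    (Sum.elim (fun _ => 0) (Sum.elim (fun i => (g i).toNat) (fun i => (-g i).toNat)))

lemma weight_relationExponent [Fintype ι] (χ : ι → M) (g : ι → ℤ) :
    Finsupp.weight (symmetricWeight (κ := κ) χ) (relationExponent g) = ∑ i, g i • χ i := by
  rw [weight_symmetricWeight]
  simp [relationExponent]

lemma relationExponent_ne_zero [Finite ι] {g : ι → ℤ} (hg : g ≠ 0) :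
    relationExponent (κ := κ) g ≠ 0 := by
  obtain ⟨i, hi⟩ := Function.ne_iff.mp hg
  intro h
  have hx : (g i).toNat = 0 := DFunLike.congr_fun h (.inr (.inl i))
  have hz : (-g i).toNat = 0 := DFunLike.congr_fun h (.inr (.inr i))
  simp only [Pi.zero_apply] at hi
  omega

lemma exists_variable_private_to_basicExponent [Finite ι] (g : ι → ℤ) (t : κ ⊕ ι) :
    ∃ v ∈ (basicExponent t).support, v ∉ (relationExponent g).support ∧
      ∀ t', v ∈ (basicExponent t').support → t' = t := by
  classical
  rcases t with j | i
  · refine ⟨.inl j, by simp [basicExponent], by simp [relationExponent], ?_⟩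
    rintro (j' | i') <;> simp [basicExponent, eq_comm]
  · rcases le_or_gt (g i) 0 with hi | hi
    · refine ⟨.inr (.inl i), by simp [basicExponent], by simpa [relationExponent] using hi, ?_⟩
      rintro (j' | i') <;> simp [basicExponent, Finsupp.single_apply]
    · refine ⟨.inr (.inr i), by simp [basicExponent], by simpa [relationExponent] using hi.le, ?_⟩
      rintro (j' | i') <;> simp [basicExponent, Finsupp.single_apply]

end Finite

variable [Fintype κ] [Fintype ι]

lemma card_lt_ringKrullDim_weightZeroSubalgebra_of_not_linearIndependent (R : Type*) [CommRing R]
    [IsDomain R] {χ : ι → M} (hχ : ¬ LinearIndependent ℤ χ) :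
    ((Fintype.card κ + Fintype.card ι : ℕ) : WithBot ℕ∞) <
      ringKrullDim (weightZeroSubalgebra R (symmetricWeight (κ := κ) χ)) := by
  obtain ⟨g, hrel, i₀, hi₀⟩ := Fintype.not_linearIndependent_iff.mp hχ
  let e : Option (κ ⊕ ι) → κ ⊕ (ι ⊕ ι) →₀ ℕ := fun a => a.elim (relationExponent g) basicExponent
  rw [← Fintype.card_sum]
  refine (Nat.cast_lt.mpr (by simp)).trans_le <|
    card_le_ringKrullDim_of_exists_private_variable e ?_ fun s hs => ?_
  · rintro (_ | t)
    · exact monomial_mem_weightZeroSubalgebra ((weight_relationExponent χ g).trans hrel)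
    · exact monomial_mem_weightZeroSubalgebra (weight_basicExponent χ t)
  · by_cases hbasic : ∃ t, some t ∈ s
    · obtain ⟨t, ht⟩ := hbasic
      obtain ⟨v, hvt, hvg, hv⟩ := exists_variable_private_to_basicExponent g t
      refine ⟨some t, ht, v, hvt, ?_⟩
      rintro (_ | t') - hv'
      · exact absurd hv' hvg
      · exact congrArg some (hv t' hv')
    · have eq_none : ∀ a ∈ s, a = none := fun a ha =>
        Option.eq_none_iff_forall_ne_some.mpr fun t hat => hbasic ⟨t, hat ▸ ha⟩
      obtain ⟨a, ha⟩ := hs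
      obtain rfl := eq_none a ha
      obtain ⟨v, hv⟩ := Finsupp.support_nonempty_iff.mpr
        (relationExponent_ne_zero (κ := κ) (Function.ne_iff.mpr ⟨i₀, hi₀⟩))
      exact ⟨none, ha, v, hv, fun b hb _ => eq_none b hb⟩

theorem krullDim_invariant_subalgebra_eq_iff_general (K : Type*) [Field K] (χ : ι → M) :
    ringKrullDim (weightZeroSubalgebra K (symmetricWeight (κ := κ) χ)) =
      ((Fintype.card κ + Fintype.card ι : ℕ) : WithBot ℕ∞) ↔ LinearIndependent ℤ χ := by
  constructor
  · contrapose
    exact fun hχ =>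
      (card_lt_ringKrullDim_weightZeroSubalgebra_of_not_linearIndependent K hχ).ne'
  · intro hχ
    rw [weightZeroSubalgebra_eq_adjoin_of_linearIndependent K hχ,
      ringKrullDim_adjoin_range_of_algebraicIndependent
        (algebraicIndependent_monomial_basicExponent K), Fintype.card_sum]

end SymmetricWeight

/-- If `χ₁, …, χ_d ∈ ℤ^k` are nonzero, then the ℂ-subalgebra of
`R = ℂ[y₁,…,y_c, x₁,…,x_d, z₁,…,z_d]` spanned by the monomials of weight `0`
(where `y_j` has weight `0`, `x_i` has weight `χ_i` and `z_i` has weight `-χ_i`)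
has Krull dimension equal to `c + d` if and only if `χ₁, …, χ_d` are linearly
independent over `ℚ`. -/
theorem krullDim_invariant_subalgebra_eq_iff (k c d : ℕ) (χ : Fin d → Fin k → ℤ)
    (hχ : ∀ i, χ i ≠ 0) :
    ringKrullDim (Algebra.adjoin ℂ
        {p : MvPolynomial (SymVar c d) ℂ | ∃ e : SymVar c d →₀ ℕ,
          p = monomial e 1 ∧ monWeight k c d χ e = 0}) = ((c + d : ℕ) : WithBot ℕ∞) ↔
      LinearIndependent ℚ (fun i : Fin d => fun t : Fin k => (χ i t : ℚ)) := by
  have hdim := krullDim_invariant_subalgebra_eq_iff_general ℂ χ (κ := Fin c)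
  rw [Fintype.card_fin, Fintype.card_fin] at hdim
  exact hdim.trans (linearIndependent_algebraMap_comp_iff (S := ℚ)).symm
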